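/- Let f : T → T be a continuous map of a tree such that no cut-point of T is periodic. Then every subcontinuum A of T is asymptotically periodic under f: there is p ≥ 1 such that the sequence (f^{pn}(A))_{n≥0} converges in the Hausdorff metric on subcontinua of T. -/

import Mathlib

open Set Filter Metric Topology TopologicalSpace

/-- An arc: a subset homeomorphic to `[0,1]`. -/
def IsArc {T : Type*} [TopologicalSpace T] (A : Set T) : Prop :=
  Nonempty (↥(Set.Icc (0:ℝ) 1) ≃ₜ ↥A)

/-- An arc with endpoints `x` and `y`. -/
def IsArcBetween {T : Type*} [TopologicalSpace T] (A : Set T) (x y : T) : Prop :=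
  ∃ e : ↥(Set.Icc (0:ℝ) 1) ≃ₜ ↥A,
    ((e ⟨0, by norm_num⟩ : ↥A) : T) = x ∧ ((e ⟨1, by norm_num⟩ : ↥A) : T) = y

/-- A tree: a continuum which is uniquely arcwise connected and is a point or a
union of finitely many arcs. -/
structure IsTreeSpace (T : Type*) [MetricSpace T] : Prop where
  compact : CompactSpace T
  conn : ConnectedSpace T
  uniqueArc : ∀ x y : T, x ≠ y → ∃! A : Set T, IsArcBetween A x y
  finiteArcs : (∃ x : T, (Set.univ : Set T) = {x}) ∨
    ∃ s : Finset (Set T), (∀ A ∈ s, IsArc A) ∧ ⋃₀ (s : Set (Set T)) = Set.univ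

/-- The unique arc from `x` to `y` in a tree. -/
noncomputable def treeArc {T : Type*} [MetricSpace T] (hT : IsTreeSpace T) (x y : T) :
    Set T := by
  classical exact if h : x = y then {x} else (hT.uniqueArc x y h).choose

/-- `Comp B x` : the connected component of `x` in `B` if `x ∈ B`, else `{x}`. -/
noncomputable def Comp {T : Type*} [TopologicalSpace T] (B : Set T) (x : T) : Set T := by
  classical exact if x ∈ B then connectedComponentIn B x else {x}

/-- `x` is an endpoint of the whole space (valence one). -/
def IsEnd {T : Type*} [TopologicalSpace T] (x : T) : Prop :=
  IsConnected ({x}ᶜ : Set T)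

/-- `x` is a cut-point of the whole space (valence at least two). -/
def IsCut {T : Type*} [TopologicalSpace T] (x : T) : Prop :=
  ¬ IsPreconnected ({x}ᶜ : Set T)

/-- `x` is an endpoint of the subspace `S` (valence one in `S`). -/
def IsEndpointOf {T : Type*} [TopologicalSpace T] (S : Set T) (x : T) : Prop :=
  x ∈ S ∧ IsConnected (S \ {x})

/-- A subcontinuum: a nonempty compact connected subset. -/
def IsSubcontinuum {T : Type*} [TopologicalSpace T] (A : Set T) : Prop :=
  A.Nonempty ∧ IsCompact A ∧ IsConnected A

/-- Attracting fixed point. -/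
def IsAFP {T : Type*} [TopologicalSpace T] (f : T → T) (x : T) : Prop :=
  f x = x ∧ ∀ U : Set T, IsOpen U → x ∈ U →
    ∃ V : Set T, IsOpen V ∧ x ∈ V ∧ V ⊆ U ∧ f '' closure V ⊆ V

/-- `A` is asymptotically periodic under `f`: for some `p ≥ 1` the sequence
`f^{pn}(A)` converges in the Hausdorff metric (to a nonempty compact set). -/
def AsympPeriodic {T : Type*} [MetricSpace T] (f : T → T) (A : Set T) : Prop :=
  ∃ p : ℕ, 1 ≤ p ∧ ∃ L : Set T, L.Nonempty ∧ IsCompact L ∧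
    Tendsto (fun n : ℕ => hausdorffDist (f^[p * n] '' A) L) atTop (𝓝 0)

/-- Kuratowski lower limit of a sequence of sets. -/
def KLiminf {T : Type*} [TopologicalSpace T] (A : ℕ → Set T) : Set T :=
  {x | ∀ U : Set T, IsOpen U → x ∈ U → ∀ᶠ n in atTop, (U ∩ A n).Nonempty}

/-- Kuratowski upper limit of a sequence of sets. -/
def KLimsup {T : Type*} [TopologicalSpace T] (A : ℕ → Set T) : Set T :=
  {x | ∀ U : Set T, IsOpen U → x ∈ U → ∃ᶠ n in atTop, (U ∩ A n).Nonempty}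

/-- Convergence in the hyperspace: the Kuratowski lower and upper limits agree. -/
def KConv {T : Type*} [TopologicalSpace T] (A : ℕ → Set T) : Prop :=
  KLiminf A = KLimsup A

/-- Set-theoretic limit superior of the iterated images of `A`. -/
def Ls {T : Type*} (f : T → T) (A : Set T) : Set T :=
  ⋂ m : ℕ, ⋃ n : ℕ, ⋃ (_ : m ≤ n), f^[n] '' A

/-- The hyperspace of subcontinua of `T`, with the Hausdorff metric. -/
abbrev SubCon (T : Type*) [MetricSpace T] :=
  {A : NonemptyCompacts T // IsConnected (A.1 : Set T)}

/-- The induced map on the hyperspace of subcontinua. -/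
noncomputable def indCon {T : Type*} [MetricSpace T] (f : T → T) (hf : Continuous f) :
    SubCon T → SubCon T :=
  fun A => ⟨⟨⟨f '' (A.1 : Set T), A.1.isCompact.image hf⟩, A.1.nonempty.image f⟩,
    A.2.image f hf.continuousOn⟩

/-- Topological entropy (Bowen–Dinaburg) of `f` on the subset `S`. -/
noncomputable def entropyOn {X : Type*} [MetricSpace X] (f : X → X) (S : Set X) : EReal :=
  Dynamics.coverEntropy f S

/-- Topological entropy of `f`. -/
noncomputable def entropy {X : Type*} [MetricSpace X] (f : X → X) : EReal :=
  Dynamics.coverEntropy f Set.univ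

/-- Maximal cardinality of an `(n,f,ε)`-separated subset of `S`. -/
noncomputable def sepNumOn {X : Type*} [MetricSpace X] (f : X → X) (S : Set X)
    (n : ℕ) (ε : ℝ) : ℕ :=
  sSup {k : ℕ | ∃ E : Finset X, ↑E ⊆ S ∧
    (∀ x ∈ E, ∀ y ∈ E, x ≠ y → ∃ j < n, ε < dist (f^[j] x) (f^[j] y)) ∧ E.card = k}

/-- Minimal cardinality of an `(n,f,ε)`-spanning subset of `S`. -/
noncomputable def spanNumOn {X : Type*} [MetricSpace X] (f : X → X) (S : Set X)
    (n : ℕ) (ε : ℝ) : ℕ :=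
  sInf {k : ℕ | ∃ F : Finset X, ↑F ⊆ S ∧
    (∀ x ∈ S, ∃ y ∈ F, ∀ j < n, dist (f^[j] x) (f^[j] y) ≤ ε) ∧ F.card = k}

noncomputable def sepNum {X : Type*} [MetricSpace X] (f : X → X) (n : ℕ) (ε : ℝ) : ℕ :=
  sepNumOn f Set.univ n ε

noncomputable def spanNum {X : Type*} [MetricSpace X] (f : X → X) (n : ℕ) (ε : ℝ) : ℕ :=
  spanNumOn f Set.univ n ε

/-- The graph of a map. -/
def graphOf {X : Type*} (φ : X → X) : Set (X × X) := {p | p.2 = φ p.1}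

/-- The functional envelope: the closure, in the hyperspace of nonempty compact
subsets of `X × X` with the Hausdorff metric, of the set of graphs of continuous
self-maps of `X`. -/
def FunctionalEnvelope (X : Type*) [MetricSpace X] :
    Set (NonemptyCompacts (X × X)) :=
  closure {G : NonemptyCompacts (X × X) | ∃ φ : X → X, Continuous φ ∧
    (G : Set (X × X)) = graphOf φ}

/-- `F` is the map induced by `f` on the functional envelope:
`F(φ) = f ∘ φ`, i.e. on graphs, `F(G) = (id × f)(G)`. -/
def IsEnvelopeMap {X : Type*} [MetricSpace X] (f : X → X)
    (F : ↥(FunctionalEnvelope X) → ↥(FunctionalEnvelope X)) : Prop :=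
  ∀ G : ↥(FunctionalEnvelope X),
    ((F G : NonemptyCompacts (X × X)) : Set (X × X)) =
      Prod.map id f '' ((G : NonemptyCompacts (X × X)) : Set (X × X))

/-- The setoid on `T` identifying all points of `M` (so that `Quotient` is `T/M`). -/
def collapseSetoid {T : Type*} (M : Set T) : Setoid T where
  r a b := a = b ∨ (a ∈ M ∧ b ∈ M)
  iseqv := by
    refine ⟨fun a => Or.inl rfl, ?_, ?_⟩
    · rintro a b (rfl | ⟨h1, h2⟩)
      exacts [Or.inl rfl, Or.inr ⟨h2, h1⟩]
    · rintro a b c (rfl | ⟨h1, h2⟩) h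
      · exact h
      · rcases h with rfl | ⟨h3, h4⟩
        exacts [Or.inr ⟨h1, h2⟩, Or.inr ⟨h1, h4⟩]

/-- A parametrization of an arc by the unit interval. -/
def IsArcParam {T : Type*} [TopologicalSpace T] (γ : ℝ → T) : Prop :=
  Continuous γ ∧ InjOn γ (Icc 0 1)

/-- `p` and `q` are equal or are the endpoints of an arc contained in `U`. -/
def ArcJoined {T : Type*} [TopologicalSpace T] (U : Set T) (p q : T) : Prop :=
  ∃ (γ : ℝ → T) (l : ℝ), 0 ≤ l ∧ ContinuousOn γ (Icc 0 l) ∧ InjOn γ (Icc 0 l) ∧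
    γ 0 = p ∧ γ l = q ∧ γ '' Icc 0 l ⊆ U

theorem image_reverse {T : Type*} (γ : ℝ → T) : (fun t => γ (1 - t)) '' Icc 0 1 = γ '' Icc 0 1 := by
  have : (fun t : ℝ => 1 - t) '' Icc 0 1 = Icc 0 1 := by simp
  conv_rhs => rw [← this, image_image]

section Arcs

variable {T : Type*} [MetricSpace T]

theorem ArcJoined.of_param {U : Set T} {γ : ℝ → T} {a b : ℝ} (hab : a ≤ b)
    (hc : ContinuousOn γ (Icc a b)) (hi : InjOn γ (Icc a b)) (hU : γ '' Icc a b ⊆ U) :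
    ArcJoined U (γ a) (γ b) := by
  refine ⟨fun r => γ (a + r), b - a, by linarith, ?_, ?_, by simp, by simp, ?_⟩
  · refine hc.comp (by fun_prop) fun r hr => ?_
    simp only [mem_Icc] at hr ⊢
    constructor <;> linarith [hr.1, hr.2]
  · intro r hr s hs h
    simp only [mem_Icc] at hr hs
    have := hi (x₁ := a + r) (x₂ := a + s) ⟨by linarith, by linarith⟩ ⟨by linarith, by linarith⟩ h
    linarith
  · rintro _ ⟨r, hr, rfl⟩
    exact hU ⟨a + r, ⟨by linarith [hr.1], by linarith [hr.2]⟩, rfl⟩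

theorem ArcJoined.refl {U : Set T} {p : T} (hp : p ∈ U) : ArcJoined U p p :=
  ⟨fun _ => p, 0, le_rfl, continuousOn_const, by simp, rfl, rfl, by simpa using hp⟩

theorem ArcJoined.symm {U : Set T} {p q : T} (h : ArcJoined U p q) : ArcJoined U q p := by
  obtain ⟨γ, l, hl, hc, hi, rfl, rfl, hU⟩ := h
  refine ⟨fun r => γ (l - r), l, hl, ?_, ?_, by simp, by simp, ?_⟩
  · refine hc.comp (by fun_prop) fun r hr => ?_
    simp only [mem_Icc] at hr ⊢
    constructor <;> linarith [hr.1, hr.2]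
  · intro r hr s hs h
    simp only [mem_Icc] at hr hs
    have := hi (x₁ := l - r) (x₂ := l - s) ⟨by linarith, by linarith⟩ ⟨by linarith, by linarith⟩ h
    linarith
  · rintro _ ⟨r, hr, rfl⟩
    exact hU ⟨l - r, ⟨by linarith [hr.2], by linarith [hr.1]⟩, rfl⟩

theorem ArcJoined.trans {U : Set T} {p q r : T} (h₁ : ArcJoined U p q) (h₂ : ArcJoined U q r) :
    ArcJoined U p r := by
  obtain ⟨α, l, hl, hαc, hαi, rfl, hq, hαU⟩ := h₁
  obtain ⟨β, m, hm, hβc, hβi, hβ0, rfl, hβU⟩ := h₂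
  have hB : IsClosed (β '' Icc 0 m) := (isCompact_Icc.image_of_continuousOn hβc).isClosed
  have hS : IsCompact (Icc 0 l ∩ α ⁻¹' (β '' Icc 0 m)) :=
    isCompact_Icc.of_isClosed_subset (hαc.preimage_isClosed_of_isClosed isClosed_Icc hB)
      inter_subset_left
  obtain ⟨t₀, ⟨ht₀, u, hu, hut⟩, hmin⟩ := hS.exists_isLeast
    ⟨l, right_mem_Icc.2 hl, 0, left_mem_Icc.2 hm, hβ0.trans hq.symm⟩
  have hmin' : ∀ t ∈ Icc 0 t₀, ∀ v ∈ Icc 0 m, α t = β v → t = t₀ := fun t ht v hv h =>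
    le_antisymm ht.2 (hmin ⟨⟨ht.1, ht.2.trans ht₀.2⟩, v, hv, h.symm⟩)
  simp only [mem_Icc] at ht₀ hu
  let δ : ℝ → T := fun t => if t ≤ t₀ then α t else β (u + (t - t₀))
  have hδ₁ : ∀ t, t ≤ t₀ → δ t = α t := fun t ht => if_pos ht
  have hδ₂ : ∀ t, t₀ ≤ t → δ t = β (u + (t - t₀)) := by
    intro t ht
    rcases ht.eq_or_lt with rfl | ht
    · simp [δ, hut]
    · exact if_neg (not_le.2 ht)
  have hsplit : Icc 0 (t₀ + (m - u)) = Icc 0 t₀ ∪ Icc t₀ (t₀ + (m - u)) :=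
    (Icc_union_Icc_eq_Icc ht₀.1 (by linarith)).symm
  refine ⟨δ, t₀ + (m - u), by linarith, ?_, ?_, ?_, ?_, ?_⟩
  · rw [hsplit]
    refine ContinuousOn.union_of_isClosed ?_ ?_ isClosed_Icc isClosed_Icc
    · exact (hαc.mono (Icc_subset_Icc_right ht₀.2)).congr fun t ht => hδ₁ t ht.2
    · refine (ContinuousOn.comp (g := β) (f := fun t => u + (t - t₀)) hβc (by fun_prop)
        fun t ht => ?_).congr fun t ht => hδ₂ t ht.1
      simp only [mem_Icc] at ht ⊢
      constructor <;> linarith [ht.1, ht.2]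
  · have key : ∀ s ∈ Icc 0 t₀, ∀ t, t₀ < t → t ≤ t₀ + (m - u) → δ s ≠ δ t := by
      intro s hs t ht ht' h
      rw [hδ₁ s hs.2, hδ₂ t ht.le] at h
      have hv : u + (t - t₀) ∈ Icc 0 m := ⟨by linarith, by linarith⟩
      have := hmin' s hs _ hv h
      rw [this, ← hut] at h
      have := hβi hu hv h
      linarith
    intro s hs t ht h
    rcases le_or_gt s t₀ with h₁ | h₁ <;> rcases le_or_gt t t₀ with h₂ | h₂
    · rw [hδ₁ s h₁, hδ₁ t h₂] at h
      exact hαi ⟨hs.1, h₁.trans ht₀.2⟩ ⟨ht.1, h₂.trans ht₀.2⟩ h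
    · exact (key s ⟨hs.1, h₁⟩ t h₂ ht.2 h).elim
    · exact (key t ⟨ht.1, h₂⟩ s h₁ hs.2 h.symm).elim
    · rw [hδ₂ s h₁.le, hδ₂ t h₂.le] at h
      have := hβi (x₁ := u + (s - t₀)) (x₂ := u + (t - t₀)) ⟨by linarith, by linarith [hs.2]⟩
        ⟨by linarith, by linarith [ht.2]⟩ h
      linarith
  · exact hδ₁ 0 ht₀.1
  · rw [hδ₂ _ (by linarith)]
    congr 1
    ring
  · rintro _ ⟨t, ht, rfl⟩
    rcases le_or_gt t t₀ with h | h
    · rw [hδ₁ t h]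
      exact hαU ⟨t, ⟨ht.1, h.trans ht₀.2⟩, rfl⟩
    · rw [hδ₂ t h.le]
      exact hβU ⟨_, ⟨by linarith, by linarith [ht.2]⟩, rfl⟩

theorem ArcJoined.exists_isCompact {U : Set T} {p q : T} (h : ArcJoined U p q) :
    ∃ K ⊆ U, IsCompact K ∧ IsPreconnected K ∧ p ∈ K ∧ q ∈ K := by
  obtain ⟨γ, l, hl, hc, -, rfl, rfl, hU⟩ := h
  exact ⟨_, hU, isCompact_Icc.image_of_continuousOn hc, isPreconnected_Icc.image _ hc,
    mem_image_of_mem _ (left_mem_Icc.2 hl), mem_image_of_mem _ (right_mem_Icc.2 hl)⟩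

theorem isArcBetween_of_param {γ : ℝ → T} {a b : ℝ} (hab : a < b)
    (hc : ContinuousOn γ (Icc a b)) (hi : InjOn γ (Icc a b)) :
    IsArcBetween (γ '' Icc a b) (γ a) (γ b) := by
  have hmem : ∀ t : Icc (0 : ℝ) 1, a + (b - a) * t ∈ Icc a b := fun t =>
    ⟨by nlinarith [t.2.1], by nlinarith [t.2.2]⟩
  let φ : Icc (0 : ℝ) 1 → γ '' Icc a b := fun t => ⟨γ (a + (b - a) * t), _, hmem t, rfl⟩
  have hφ : Function.Bijective φ := by
    constructor
    · intro s t h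
      have := hi (hmem s) (hmem t) (congrArg Subtype.val h)
      have h' : (b - a) * ((s : ℝ) - t) = 0 := by linarith
      rcases mul_eq_zero.1 h' with h' | h'
      · linarith
      · exact Subtype.ext (by linarith)
    · rintro ⟨_, t, ht, rfl⟩
      have hba : 0 < b - a := by linarith
      refine ⟨⟨(t - a) / (b - a), div_nonneg (by linarith [ht.1]) hba.le,
        (div_le_one hba).2 (by linarith [ht.2])⟩, Subtype.ext ?_⟩
      have : a + (b - a) * ((t - a) / (b - a)) = t := by field_simp; ring
      simp only [φ, this]
  have hφc : Continuous φ := by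
    refine Continuous.subtype_mk ?_ _
    exact hc.comp_continuous (by fun_prop) hmem
  refine ⟨Continuous.homeoOfEquivCompactToT2 (f := Equiv.ofBijective φ hφ) hφc, ?_, ?_⟩
  · change γ (a + (b - a) * 0) = γ a
    simp
  · change γ (a + (b - a) * 1) = γ b
    simp

theorem exists_param_of_homeo {A : Set T} (e : Icc (0 : ℝ) 1 ≃ₜ A) :
    ∃ γ : ℝ → T, IsArcParam γ ∧ γ '' Icc 0 1 = A ∧ ∀ t (ht : t ∈ Icc (0 : ℝ) 1),
      γ t = e ⟨t, ht⟩ := by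
  refine ⟨fun t => e (projIcc 0 1 zero_le_one t), ⟨?_, ?_⟩, ?_, ?_⟩
  · exact continuous_subtype_val.comp (e.continuous.comp continuous_projIcc)
  · intro s hs t ht h
    have := e.injective (Subtype.ext h)
    simpa [projIcc_of_mem _ hs, projIcc_of_mem _ ht] using this
  · ext x
    constructor
    · rintro ⟨t, -, rfl⟩
      exact Subtype.coe_prop _
    · intro hx
      refine ⟨e.symm ⟨x, hx⟩, Subtype.coe_prop _, ?_⟩
      simp
  · intro t ht
    simp [projIcc_of_mem _ ht]

theorem IsArcParam.reverse {γ : ℝ → T} (hγ : IsArcParam γ) :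
    IsArcParam (fun t => γ (1 - t)) := by
  constructor
  · exact hγ.1.comp (by fun_prop)
  · intro r hr s hs h
    simp only [mem_Icc] at hr hs
    have := hγ.2 (x₁ := 1 - r) (x₂ := 1 - s) ⟨by linarith, by linarith⟩ ⟨by linarith, by linarith⟩ h
    linarith

theorem IsArcParam.isClosed_image {γ : ℝ → T} (hγ : IsArcParam γ) : IsClosed (γ '' Icc 0 1) :=
  (isCompact_Icc.image hγ.1).isClosed

theorem IsArcParam.eventually_param_near {η : ℝ → T} (hη : IsArcParam η) {r : ℝ}
    (hr : r ∈ Icc (0 : ℝ) 1) {δ : ℝ} (hδ : 0 < δ) :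
    ∀ᶠ q in 𝓝 (η r), q ∈ η '' Icc 0 1 → ∃ t ∈ Icc (0 : ℝ) 1, |t - r| < δ ∧ η t = q := by
  have hC : IsCompact (Icc (0 : ℝ) 1 ∩ {t | δ ≤ |t - r|}) :=
    isCompact_Icc.inter_right (isClosed_le continuous_const (by fun_prop))
  have hcl := (hC.image hη.1).isClosed
  have hnot : η r ∉ η '' (Icc (0 : ℝ) 1 ∩ {t | δ ≤ |t - r|}) := by
    rintro ⟨t, ⟨ht, htr⟩, h⟩
    have := hη.2 ht hr h
    simp only [mem_ofPred_eq, this, sub_self, abs_zero] at htr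
    linarith
  filter_upwards [hcl.isOpen_compl.mem_nhds hnot]
  rintro q hq ⟨t, ht, rfl⟩
  refine ⟨t, ht, ?_, rfl⟩
  by_contra h
  exact hq ⟨t, ⟨ht, not_lt.1 h⟩, rfl⟩

end Arcs

namespace IsTreeSpace

variable {T : Type*} [MetricSpace T]

theorem exists_param (hT : IsTreeSpace T) {x y : T} (h : x ≠ y) :
    ∃ γ : ℝ → T, IsArcParam γ ∧ γ 0 = x ∧ γ 1 = y := by
  obtain ⟨A, ⟨e, h0, h1⟩, -⟩ := hT.uniqueArc x y h
  obtain ⟨γ, hγ, -, he⟩ := exists_param_of_homeo e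
  exact ⟨γ, hγ, (he 0 _).trans h0, (he 1 _).trans h1⟩

theorem exists_finite_cover [Nontrivial T] (hT : IsTreeSpace T) :
    ∃ S : Set (ℝ → T), S.Finite ∧ (∀ η ∈ S, IsArcParam η) ∧ ∀ x, ∃ η ∈ S, x ∈ η '' Icc 0 1 := by
  rcases hT.finiteArcs with ⟨x, hx⟩ | ⟨s, hs, hU⟩
  · obtain ⟨y, hy⟩ := exists_ne x
    exact (hy (by simpa [hx] using mem_univ y)).elim
  · have : ∀ A : s, ∃ γ : ℝ → T, IsArcParam γ ∧ γ '' Icc 0 1 = A := fun A => by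
      obtain ⟨e⟩ := hs A A.2
      obtain ⟨γ, h1, h2, -⟩ := exists_param_of_homeo e
      exact ⟨γ, h1, h2⟩
    choose γ h1 h2 using this
    refine ⟨range γ, finite_range γ, by rintro _ ⟨A, rfl⟩; exact h1 A, fun x => ?_⟩
    obtain ⟨A, hA, hx⟩ := mem_sUnion.1 (hU ▸ mem_univ x)
    exact ⟨_, ⟨⟨A, hA⟩, rfl⟩, by rw [h2]; exact hx⟩

theorem eventually_arcJoined [Nontrivial T] (hT : IsTreeSpace T) {U : Set T} (hU : IsOpen U)
    {p : T} (hp : p ∈ U) : ∀ᶠ q in 𝓝 p, ArcJoined U p q := by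
  obtain ⟨S, hS, hpar, hcov⟩ := hT.exists_finite_cover
  have key : ∀ η ∈ S, ∀ᶠ q in 𝓝 p, q ∈ η '' Icc 0 1 → ArcJoined U p q := by
    intro η hη
    have hη' := hpar η hη
    by_cases hpη : p ∈ η '' Icc 0 1
    · obtain ⟨r, hr, rfl⟩ := hpη
      have hev : ∀ᶠ t in 𝓝 r, η t ∈ U := hη'.1.continuousAt (hU.mem_nhds hp)
      obtain ⟨δ, hδ, hball⟩ := Metric.mem_nhds_iff.1 hev
      filter_upwards [hη'.eventually_param_near hr hδ] with q hq hq'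
      obtain ⟨t, ht, htr, rfl⟩ := hq hq'
      obtain ⟨htr1, htr2⟩ := abs_lt.1 htr
      have hsub : ∀ v, |v - r| < δ → η v ∈ U := fun v hvr =>
        hball (by rwa [mem_ball, Real.dist_eq])
      rcases le_total r t with h | h
      · have hI : Icc r t ⊆ Icc 0 1 := Icc_subset_Icc hr.1 ht.2
        refine .of_param h (hη'.1.continuousOn) (hη'.2.mono hI) ?_
        rintro _ ⟨v, hv, rfl⟩
        exact hsub v (abs_lt.2 ⟨by linarith [hv.1], by linarith [hv.2]⟩)
      · have hI : Icc t r ⊆ Icc 0 1 := Icc_subset_Icc ht.1 hr.2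
        refine (ArcJoined.of_param h (hη'.1.continuousOn) (hη'.2.mono hI) ?_).symm
        rintro _ ⟨v, hv, rfl⟩
        exact hsub v (abs_lt.2 ⟨by linarith [hv.1], by linarith [hv.2]⟩)
    · filter_upwards [hη'.isClosed_image.isOpen_compl.mem_nhds hpη] with q hq hq'
      exact (hq hq').elim
  filter_upwards [(eventually_all_finite hS).2 key] with q hq
  obtain ⟨η, hη, hqη⟩ := hcov q
  exact hq η hη hqη

theorem locallyConnectedSpace [Nontrivial T] (hT : IsTreeSpace T) : LocallyConnectedSpace T := by
  rw [locallyConnectedSpace_iff_connectedComponentIn_open]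
  intro F hF x _
  rw [isOpen_iff_mem_nhds]
  intro q hq
  filter_upwards [hT.eventually_arcJoined hF (connectedComponentIn_subset F x hq)] with r hr
  obtain ⟨K, hKF, -, hK, hqK, hrK⟩ := hr.exists_isCompact
  rw [connectedComponentIn_eq hq]
  exact hK.subset_connectedComponentIn hqK hKF hrK

theorem arcJoined_of_mem_component [Nontrivial T] (hT : IsTreeSpace T) {U : Set T}
    (hU : IsOpen U) {x y : T} (hy : y ∈ connectedComponentIn U x) : ArcJoined U x y := by
  have hx : x ∈ U := by
    by_contra h
    simp [connectedComponentIn_eq_empty h] at hy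
  have h1 : IsOpen {q | q ∈ U ∧ ArcJoined U x q} := isOpen_iff_mem_nhds.2 fun q hq => by
    filter_upwards [hU.mem_nhds hq.1, hT.eventually_arcJoined hU hq.1] with r hr hr'
    exact ⟨hr, hq.2.trans hr'⟩
  have h2 : IsOpen {q | q ∈ U ∧ ¬ ArcJoined U x q} := isOpen_iff_mem_nhds.2 fun q hq => by
    filter_upwards [hU.mem_nhds hq.1, hT.eventually_arcJoined hU hq.1] with r hr hr'
    exact ⟨hr, fun h => hq.2 (h.trans hr'.symm)⟩
  by_contra hxy
  have hsub := connectedComponentIn_subset U x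
  obtain ⟨z, -, hz1, hz2⟩ := isPreconnected_connectedComponentIn (F := U) (x := x) _ _ h1 h2
    (fun q hq => by
      by_cases h : ArcJoined U x q
      · exact Or.inl ⟨hsub hq, h⟩
      · exact Or.inr ⟨hsub hq, h⟩)
    ⟨x, mem_connectedComponentIn hx, hx, .refl hx⟩ ⟨y, hy, hsub hy, hxy⟩
  exact hz2.2 hz1.2

theorem notMem_component_of_param [Nontrivial T] (hT : IsTreeSpace T) {γ : ℝ → T}
    (hγ : IsArcParam γ) {r s t : ℝ} (hr : 0 ≤ r) (hrs : r < s) (hst : s < t) (ht : t ≤ 1) :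
    γ t ∉ connectedComponentIn {γ s}ᶜ (γ r) := by
  intro h
  obtain ⟨β, l, hl, hc, hi, h0, h1, hU⟩ :=
    hT.arcJoined_of_mem_component isOpen_compl_singleton h
  have hI : Icc r t ⊆ Icc 0 1 := Icc_subset_Icc hr ht
  have hne : γ r ≠ γ t := fun h => by
    have := hγ.2 (hI ⟨le_rfl, by linarith⟩) (hI ⟨by linarith, le_rfl⟩) h
    linarith
  have hl' : 0 < l := by
    refine hl.lt_of_ne fun h => hne ?_
    rw [← h0, ← h1, h]
  have e1 := isArcBetween_of_param hl' hc hi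
  rw [h0, h1] at e1
  have e2 := isArcBetween_of_param (hrs.trans hst) (hγ.1.continuousOn) (hγ.2.mono hI)
  have := (hT.uniqueArc _ _ hne).unique e1 e2
  rw [this] at hU
  exact hU ⟨s, ⟨hrs.le, hst.le⟩, rfl⟩ rfl

theorem param_mem_of_isPreconnected [Nontrivial T] (hT : IsTreeSpace T) {γ : ℝ → T}
    (hγ : IsArcParam γ) {r s t : ℝ} (hr : 0 ≤ r) (hrs : r ≤ s) (hst : s ≤ t) (ht : t ≤ 1)
    {C : Set T} (hC : IsPreconnected C) (hrC : γ r ∈ C) (htC : γ t ∈ C) : γ s ∈ C := by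
  rcases hrs.eq_or_lt with rfl | hrs
  · exact hrC
  rcases hst.eq_or_lt with rfl | hst
  · exact htC
  by_contra h
  exact hT.notMem_component_of_param hγ hr hrs hst ht
    (hC.subset_connectedComponentIn hrC (subset_compl_singleton_iff.2 h) htC)

theorem _root_.mem_connectedComponentIn_symm {F : Set T} {x y : T}
    (h : y ∈ connectedComponentIn F x) : x ∈ connectedComponentIn F y := by
  have hx : x ∈ F := by
    by_contra hx
    simp [connectedComponentIn_eq_empty hx] at h
  rw [← connectedComponentIn_eq h]
  exact mem_connectedComponentIn hx

theorem _root_.mem_connectedComponentIn_trans {F : Set T} {x y z : T}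
    (h₁ : y ∈ connectedComponentIn F x) (h₂ : z ∈ connectedComponentIn F y) :
    z ∈ connectedComponentIn F x := by
  rwa [connectedComponentIn_eq h₁]

theorem _root_.IsPreconnected.mem_connectedComponentIn_compl {C : Set T} (hC : IsPreconnected C)
    {z p q : T} (hz : z ∉ C) (hp : p ∈ C) (hq : q ∈ C) : q ∈ connectedComponentIn {z}ᶜ p :=
  hC.subset_connectedComponentIn hp (subset_compl_singleton_iff.2 hz) hq

theorem isOpen_component [Nontrivial T] (hT : IsTreeSpace T) (x y : T) :
    IsOpen (connectedComponentIn {x}ᶜ y) :=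
  have := hT.locallyConnectedSpace
  isOpen_compl_singleton.connectedComponentIn

theorem isClosed_insert_component [Nontrivial T] (hT : IsTreeSpace T) (x y : T) :
    IsClosed (insert x (connectedComponentIn {x}ᶜ y)) := by
  refine isClosed_of_closure_subset fun q hq => ?_
  rcases eq_or_ne q x with rfl | hqx
  · exact mem_insert _ _
  refine mem_insert_of_mem _ ?_
  have hU : (connectedComponentIn {x}ᶜ q ∩ {x}ᶜ) ∈ 𝓝 q :=
    ((hT.isOpen_component x q).inter isOpen_compl_singleton).mem_nhds
      ⟨mem_connectedComponentIn hqx, hqx⟩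
  obtain ⟨r, ⟨hr, hrx⟩, hr'⟩ := mem_closure_iff_nhds.1 hq _ hU
  rcases hr' with rfl | hr'
  · exact (hrx rfl).elim
  · exact mem_connectedComponentIn_trans hr' (mem_connectedComponentIn_symm hr)

theorem isPreconnected_insert_component [Nontrivial T] (hT : IsTreeSpace T) {x y : T}
    (h : y ≠ x) : IsPreconnected (insert x (connectedComponentIn {x}ᶜ y)) := by
  have hy : y ∈ connectedComponentIn {x}ᶜ y := mem_connectedComponentIn h
  have hxn : x ∉ connectedComponentIn {x}ᶜ y := fun hx => connectedComponentIn_subset _ _ hx rfl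
  have hx : x ∈ closure (connectedComponentIn {x}ᶜ y) := by
    by_contra hx
    have hcl : IsClosed (connectedComponentIn {x}ᶜ y) := by
      refine isClosed_of_closure_subset fun q hq => ?_
      rcases closure_minimal (subset_insert _ _) (hT.isClosed_insert_component x y) hq with rfl | hq'
      · exact (hx hq).elim
      · exact hq'
    have := hT.conn
    have := IsClopen.eq_univ ⟨hcl, hT.isOpen_component x y⟩ ⟨y, hy⟩
    exact hxn (this ▸ mem_univ x)
  exact isPreconnected_connectedComponentIn.subset_closure (subset_insert _ _)
    (insert_subset hx subset_closure)

theorem eventually_mem_component [Nontrivial T] (hT : IsTreeSpace T) {x z q : T}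
    (h : q ∈ connectedComponentIn {z}ᶜ x) :
    ∀ᶠ w : T × T in 𝓝 (z, q), w.2 ∈ connectedComponentIn {w.1}ᶜ x := by
  obtain ⟨K, hKz, hKc, hK, hxK, hqK⟩ :=
    (hT.arcJoined_of_mem_component isOpen_compl_singleton h).exists_isCompact
  obtain ⟨V, W, hV, hW, hKV, hzW, hVW⟩ :=
    hKc.separation_of_notMem (subset_compl_singleton_iff.1 hKz)
  have := hT.locallyConnectedSpace
  have hN : connectedComponentIn V q ∈ 𝓝 q :=
    (hV.connectedComponentIn).mem_nhds (mem_connectedComponentIn (hKV hqK))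
  filter_upwards [prod_mem_nhds (hW.mem_nhds hzW) hN]
  rintro ⟨z', q'⟩ ⟨hz', hq'⟩
  have hconn : IsPreconnected (K ∪ connectedComponentIn V q) :=
    hK.union q hqK (mem_connectedComponentIn (hKV hqK)) isPreconnected_connectedComponentIn
  refine hconn.mem_connectedComponentIn_compl ?_ (Or.inl hxK) (Or.inr hq')
  intro hz
  have : z' ∈ V := hz.elim (fun h => hKV h) fun h => connectedComponentIn_subset _ _ h
  exact disjoint_left.1 hVW this hz'

theorem isCut_param [Nontrivial T] (hT : IsTreeSpace T) {γ : ℝ → T} (hγ : IsArcParam γ) {s : ℝ}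
    (h0 : 0 < s) (h1 : s < 1) : IsCut (γ s) := by
  intro h
  have hs : s ∈ Icc (0 : ℝ) 1 := ⟨h0.le, h1.le⟩
  refine hT.notMem_component_of_param hγ le_rfl h0 h1 le_rfl
    (h.mem_connectedComponentIn_compl (by simp) ?_ ?_)
  · exact fun h => h0.ne (hγ.2 (by simp) hs h)
  · exact fun h => h1.ne' (hγ.2 (by simp) hs h)

theorem mem_component_or_mem_component [Nontrivial T] (hT : IsTreeSpace T) {f : T → T}
    (hf : Continuous f) (hfix : ∀ x, IsCut x → f x ≠ x) {x y : T} (hx : IsCut x) (hy : IsCut y)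
    (hxy : x ≠ y) :
    y ∈ connectedComponentIn {x}ᶜ (f x) ∨ x ∈ connectedComponentIn {y}ᶜ (f y) := by
  by_contra! hcon
  obtain ⟨hyx, hxy'⟩ := hcon
  obtain ⟨γ, hγ, rfl, rfl⟩ := hT.exists_param hxy
  have hγc := hγ.1
  have hne : ∀ s ∈ Icc (0 : ℝ) 1, ∀ t ∈ Icc (0 : ℝ) 1, s ≠ t → γ s ≠ γ t := fun s hs t ht h h' =>
    h (hγ.2 hs ht h')
  have hpre : ∀ a b, IsPreconnected (γ '' Icc a b) := fun a b =>
    isPreconnected_Icc.image _ hγc.continuousOn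
  let L : Set ℝ := {t | f (γ t) ∈ connectedComponentIn {γ t}ᶜ (γ 0)}
  have hL : IsOpen L := isOpen_iff_mem_nhds.2 fun t ht =>
    (Continuous.continuousAt (f := fun t => (γ t, f (γ t))) (by fun_prop)).eventually
      (hT.eventually_mem_component ht)
  have h0 : ∀ᶠ t in 𝓝 (0 : ℝ), f (γ t) ∈ connectedComponentIn {γ 0}ᶜ (f (γ 0)) :=
    (hf.comp hγc).continuousAt.eventually
      ((hT.isOpen_component _ _).mem_nhds (mem_connectedComponentIn (hfix _ hx)))
  obtain ⟨ε, hε, hball⟩ := Metric.eventually_nhds_iff.1 h0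
  have hsmall : ∀ t, 0 < t → t < ε → t ≤ 1 → t ∈ L := by
    intro t ht0 htε ht1
    have ht : t ∈ Icc (0 : ℝ) 1 := ⟨ht0.le, ht1⟩
    have hmem := hball (y := t) (by rwa [Real.dist_eq, sub_zero, abs_of_pos ht0])
    refine (hT.isPreconnected_insert_component (hfix _ hx)).mem_connectedComponentIn_compl ?_
      (mem_insert _ _) (mem_insert_of_mem _ hmem)
    rintro (h | h)
    · exact hne t ht 0 (by simp) ht0.ne' h
    · refine hyx (mem_connectedComponentIn_trans h ((hpre t 1).mem_connectedComponentIn_compl ?_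
        ⟨t, ⟨le_rfl, ht1⟩, rfl⟩ ⟨1, ⟨ht1, le_rfl⟩, rfl⟩))
      rintro ⟨s, hs, h⟩
      exact hne s ⟨by linarith [hs.1], hs.2⟩ 0 (by simp) (by linarith [hs.1]) h
  have h1L : (1 : ℝ) ∉ L := fun h => hxy' (mem_connectedComponentIn_symm h)
  have hε1 : ε ≤ 1 := by
    by_contra! h
    exact h1L (hsmall 1 one_pos h le_rfl)
  obtain ⟨t₀, ⟨ht₀, ht₀L⟩, hmin⟩ :=
    (isCompact_Icc.inter_right hL.isClosed_compl).exists_isLeast ⟨1, ⟨hε1, le_rfl⟩, h1L⟩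
  have ht₀0 : 0 < t₀ := hε.trans_le ht₀.1
  have hleft : ∀ s, 0 < s → s < t₀ → s ∈ L := by
    intro s hs hst
    by_contra hsL
    rcases lt_or_ge s ε with h | h
    · exact hsL (hsmall s hs h (by linarith [ht₀.2]))
    · exact absurd (hmin ⟨⟨h, by linarith [ht₀.2]⟩, hsL⟩) (not_le.2 hst)
  have hz : IsCut (γ t₀) := by
    rcases ht₀.2.eq_or_lt with h | h
    · rwa [h]
    · exact hT.isCut_param hγ ht₀0 h
  have hev : ∀ᶠ s in 𝓝 t₀, f (γ s) ∈ connectedComponentIn {γ t₀}ᶜ (f (γ t₀)) :=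
    (hf.comp hγc).continuousAt.eventually
      ((hT.isOpen_component _ _).mem_nhds (mem_connectedComponentIn (hfix _ hz)))
  obtain ⟨s, hs, hs0, hst⟩ := ((hev.filter_mono nhdsWithin_le_nhds).and
    (Ioo_mem_nhdsLT ht₀0)).exists
  have hs' : s ∈ Icc (0 : ℝ) 1 := ⟨hs0.le, by linarith [ht₀.2]⟩
  have ht₀' : t₀ ∈ Icc (0 : ℝ) 1 := ⟨ht₀0.le, ht₀.2⟩
  have hright : f (γ s) ∈ connectedComponentIn {γ s}ᶜ (γ t₀) := by
    refine (hT.isPreconnected_insert_component (hfix _ hz)).mem_connectedComponentIn_compl ?_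
      (mem_insert _ _) (mem_insert_of_mem _ hs)
    rintro (h | h)
    · exact hne s hs' t₀ ht₀' hst.ne h
    · refine ht₀L (mem_connectedComponentIn_symm (mem_connectedComponentIn_trans h
        ((hpre 0 s).mem_connectedComponentIn_compl ?_
        ⟨s, ⟨hs0.le, le_rfl⟩, rfl⟩ ⟨0, ⟨le_rfl, hs0.le⟩, rfl⟩)))
      rintro ⟨r, hr, h⟩
      exact hne r ⟨hr.1, by linarith [hr.2, hs'.2]⟩ t₀ ht₀' (by linarith [hr.2]) h
  exact hT.notMem_component_of_param hγ le_rfl hs0 hst ht₀.2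
    (mem_connectedComponentIn_trans (hleft s hs0 hst) (mem_connectedComponentIn_symm hright))

theorem exists_fixed_attractor [Nontrivial T] (hT : IsTreeSpace T) {f : T → T}
    (hf : Continuous f) (hfix : ∀ x, IsCut x → f x ≠ x) :
    ∃ a, f a = a ∧ ∀ x, IsCut x → f x ∈ connectedComponentIn {x}ᶜ a := by
  have := hT.compact
  have hfin : (⋂ x : {x : T // IsCut x},
      insert x.1 (connectedComponentIn {x.1}ᶜ (f x.1))).Nonempty := by
    refine CompactSpace.iInter_nonempty (fun x => hT.isClosed_insert_component _ _) fun s => ?_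
    rcases s.eq_empty_or_nonempty with rfl | hs
    · simp
    obtain ⟨x, hxs, hmin⟩ := s.exists_minimalFor
      (fun x : {x : T // IsCut x} => insert x.1 (connectedComponentIn {x.1}ᶜ (f x.1))) hs
    refine ⟨x, mem_iInter₂.2 fun y hy => ?_⟩
    by_contra hxy
    have hne : x.1 ≠ y.1 := fun h => hxy (h ▸ mem_insert _ _)
    have hyx := (hT.mem_component_or_mem_component hf hfix x.2 y.2 hne).resolve_right
      fun h => hxy (mem_insert_of_mem _ h)
    refine hxy (hmin hy ?_ (mem_insert _ _))
    intro q hq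
    refine mem_insert_of_mem _ (mem_connectedComponentIn_trans hyx ?_)
    exact (hT.isPreconnected_insert_component (hfix _ y.2)).mem_connectedComponentIn_compl hxy
      (mem_insert _ _) hq
  obtain ⟨a, ha⟩ := hfin
  have ha' : ∀ x, IsCut x → x ≠ a → f x ∈ connectedComponentIn {x}ᶜ a := fun x hx hxa =>
    mem_connectedComponentIn_symm (((mem_iInter.1 ha) ⟨x, hx⟩).resolve_left hxa.symm)
  have hfa : f a = a := by
    by_contra hfa
    obtain ⟨γ, hγ, h0, h1⟩ := hT.exists_param (Ne.symm hfa)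
    have hγc := hγ.1
    have hev : ∀ᶠ s in 𝓝 (0 : ℝ), f (γ s) ∈ connectedComponentIn {γ s}ᶜ (f a) := by
      have hmem : f (γ 0) ∈ connectedComponentIn {γ 0}ᶜ (f a) := by
        rw [h0]
        exact mem_connectedComponentIn hfa
      exact (Continuous.continuousAt (f := fun t => (γ t, f (γ t))) (by fun_prop)).eventually
        (hT.eventually_mem_component hmem)
    obtain ⟨s, hs, hs0, hs1⟩ := ((hev.filter_mono nhdsWithin_le_nhds).and
      (Ioo_mem_nhdsGT one_pos)).exists
    have hsa : γ s ≠ a := fun h => hs0.ne' (hγ.2 ⟨hs0.le, hs1.le⟩ (by simp) (h.trans h0.symm))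
    have := ha' _ (hT.isCut_param hγ hs0 hs1) hsa
    refine hT.notMem_component_of_param hγ le_rfl hs0 hs1 le_rfl ?_
    rw [h0, h1]
    exact mem_connectedComponentIn_trans this (mem_connectedComponentIn_symm hs)
  exact ⟨a, hfa, fun x hx => ha' x hx fun h => hfix x hx (h ▸ hfa)⟩

theorem exists_separating_param [Nontrivial T] (hT : IsTreeSpace T) {γ : ℝ → T}
    (hγ : IsArcParam γ) (he : ¬ IsCut (γ 0)) {q : T} (hq : q ≠ γ 0) :
    ∃ δ > 0, δ ≤ 1 ∧ ∀ s, 0 < s → s < δ → q ∈ connectedComponentIn {γ s}ᶜ (γ 1) := by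
  have h01 : γ 1 ≠ γ 0 := fun h => one_ne_zero (hγ.2 (by simp) (by simp) h)
  have hmem : q ∈ connectedComponentIn {γ 0}ᶜ (γ 1) :=
    (not_not.1 he).subset_connectedComponentIn h01 Subset.rfl hq
  obtain ⟨K, hKz, hKc, hK, h1K, hqK⟩ :=
    (hT.arcJoined_of_mem_component isOpen_compl_singleton hmem).exists_isCompact
  have hev : ∀ᶠ s in 𝓝 (0 : ℝ), γ s ∈ Kᶜ :=
    hγ.1.continuousAt.eventually
      (hKc.isClosed.isOpen_compl.mem_nhds (subset_compl_singleton_iff.1 hKz))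
  obtain ⟨δ, hδ, hball⟩ := Metric.eventually_nhds_iff.1 hev
  refine ⟨min δ 1, by positivity, min_le_right _ _, fun s hs0 hs => ?_⟩
  refine hK.mem_connectedComponentIn_compl (hball ?_) h1K hqK
  rw [Real.dist_eq, sub_zero, abs_of_pos hs0]
  exact hs.trans_le (min_le_left _ _)

theorem param_image_mem_nhds [Nontrivial T] (hT : IsTreeSpace T) {γ : ℝ → T}
    (hγ : IsArcParam γ) (he : ¬ IsCut (γ 0)) {s : ℝ} (hs0 : 0 < s) (hs1 : s ≤ 1) :
    γ '' Icc 0 s ∈ 𝓝 (γ 0) := by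
  have hs : γ s ≠ γ 0 := fun h => hs0.ne' (hγ.2 ⟨hs0.le, hs1⟩ (by simp) h)
  have hstart : ∀ η : ℝ → T, IsArcParam η → η 0 = γ 0 →
      ∀ᶠ q in 𝓝 (γ 0), q ∈ η '' Icc 0 1 → q ∈ γ '' Icc 0 s := by
    intro η hη h0
    obtain ⟨δ, hδ, hδ1, hsep⟩ := hT.exists_separating_param hη (h0 ▸ he) (h0 ▸ hs)
    rw [← h0]
    filter_upwards [hη.eventually_param_near (r := 0) (by simp) hδ] with q hq hqη
    obtain ⟨t, ht, htδ, rfl⟩ := hq hqη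
    rw [sub_zero, abs_of_nonneg ht.1] at htδ
    rcases ht.1.eq_or_lt with rfl | ht0
    · exact ⟨0, by simp [hs0.le], h0.symm⟩
    by_contra hnot
    have h1 := (isPreconnected_Icc.image _ hγ.1.continuousOn).mem_connectedComponentIn_compl hnot
      ⟨0, ⟨le_rfl, hs0.le⟩, h0.symm⟩ ⟨s, ⟨hs0.le, le_rfl⟩, rfl⟩
    exact hT.notMem_component_of_param hη le_rfl ht0 (htδ.trans_le hδ1) le_rfl
      (mem_connectedComponentIn_trans h1 (mem_connectedComponentIn_symm (hsep t ht0 htδ)))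
  obtain ⟨S, hS, hpar, hcov⟩ := hT.exists_finite_cover
  have key : ∀ η ∈ S, ∀ᶠ q in 𝓝 (γ 0), q ∈ η '' Icc 0 1 → q ∈ γ '' Icc 0 s := by
    intro η hη
    have hη' := hpar η hη
    by_cases hmem : γ 0 ∈ η '' Icc 0 1
    · obtain ⟨r, hr, hrγ⟩ := hmem
      rcases hr.1.eq_or_lt with rfl | hr0
      · exact hstart η hη' hrγ
      rcases hr.2.eq_or_lt with rfl | hr1
      · rw [← image_reverse η]
        exact hstart _ hη'.reverse (by simpa using hrγ)
      · exact (he (hrγ ▸ hT.isCut_param hη' hr0 hr1)).elim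
    · filter_upwards [hη'.isClosed_image.isOpen_compl.mem_nhds hmem] with q hq hq'
      exact (hq hq').elim
  filter_upwards [(eventually_all_finite hS).2 key] with q hq
  obtain ⟨η, hη, hqη⟩ := hcov q
  exact hq η hη hqη

theorem finite_setOf_not_isCut [Nontrivial T] (hT : IsTreeSpace T) : {x : T | ¬ IsCut x}.Finite := by
  obtain ⟨S, hS, hpar, hcov⟩ := hT.exists_finite_cover
  refine ((hS.image fun η => η 0).union (hS.image fun η => η 1)).subset fun x hx => ?_
  obtain ⟨η, hη, t, ht, rfl⟩ := hcov x
  rcases ht.1.eq_or_lt with rfl | h0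
  · exact Or.inl ⟨η, hη, rfl⟩
  rcases ht.2.eq_or_lt with rfl | h1
  · exact Or.inr ⟨η, hη, rfl⟩
  · exact (hx (hT.isCut_param (hpar η hη) h0 h1)).elim

theorem exists_finite_rooted_cover [Nontrivial T] (hT : IsTreeSpace T) (a : T) :
    ∃ S : Set (ℝ → T), S.Finite ∧ (∀ η ∈ S, IsArcParam η ∧ η 0 = a) ∧
      ∀ x, x ≠ a → ∃ η ∈ S, x ∈ η '' Icc 0 1 := by
  obtain ⟨S, hS, hpar, hcov⟩ := hT.exists_finite_cover
  have : ∀ b : T, ∃ γ : ℝ → T, b ≠ a → IsArcParam γ ∧ γ 0 = a ∧ γ 1 = b := fun b => by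
    by_cases h : b = a
    · exact ⟨fun _ => a, fun h' => (h' h).elim⟩
    · obtain ⟨γ, hγ⟩ := hT.exists_param (Ne.symm h)
      exact ⟨γ, fun _ => hγ⟩
  choose g hg using this
  let B : Set T := ((fun η : ℝ → T => η 0) '' S ∪ (fun η : ℝ → T => η 1) '' S) \ {a}
  have hB : B.Finite := ((hS.image _).union (hS.image _)).subset sdiff_subset
  refine ⟨g '' B, hB.image g, ?_, fun x hxa => ?_⟩
  · rintro _ ⟨b, hb, rfl⟩
    exact ⟨(hg b hb.2).1, (hg b hb.2).2.1⟩
  obtain ⟨η, hη, t, ht, rfl⟩ := hcov x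
  have h0B : η 0 ≠ a → η 0 ∈ B := fun h => ⟨Or.inl ⟨η, hη, rfl⟩, h⟩
  have h1B : η 1 ≠ a → η 1 ∈ B := fun h => ⟨Or.inr ⟨η, hη, rfl⟩, h⟩
  rcases ht.1.eq_or_lt with rfl | ht0
  · exact ⟨_, ⟨_, h0B hxa, rfl⟩, 1, by simp, (hg _ hxa).2.2⟩
  rcases ht.2.eq_or_lt with rfl | ht1
  · exact ⟨_, ⟨_, h1B hxa, rfl⟩, 1, by simp, (hg _ hxa).2.2⟩
  by_contra! hcon
  have key : ∀ b, (b ≠ a → b ∈ B) → b ∈ connectedComponentIn {η t}ᶜ a := by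
    intro b hb
    by_cases hba : b = a
    · rw [hba]
      exact mem_connectedComponentIn (Ne.symm hxa)
    · obtain ⟨h1, h2, h3⟩ := hg b hba
      exact (isPreconnected_Icc.image _ h1.1.continuousOn).mem_connectedComponentIn_compl
        (hcon _ ⟨b, hb hba, rfl⟩) ⟨0, by simp, h2⟩ ⟨1, by simp, h3⟩
  exact hT.notMem_component_of_param (hpar η hη) le_rfl ht0 ht1 le_rfl
    (mem_connectedComponentIn_trans (mem_connectedComponentIn_symm (key _ h0B)) (key _ h1B))

theorem exists_iterate_param_le [Nontrivial T] (hT : IsTreeSpace T) {f : T → T}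
    (hf : Continuous f) {γ : ℝ → T} (hγ : IsArcParam γ) (ha : ¬ IsCut (γ 0))
    (hfa : f (γ 0) = γ 0) (hatt : ∀ x, IsCut x → f x ∈ connectedComponentIn {x}ᶜ (γ 0)) :
    ∃ s₀ > 0, s₀ < 1 ∧ ∀ (n : ℕ), ∀ s ∈ Icc 0 s₀, ∃ s' ∈ Icc 0 s, f^[n] (γ s) = γ s' := by
  have hev : ∀ᶠ s in 𝓝 (0 : ℝ), f (γ s) ∈ γ '' Icc 0 1 := by
    refine (hf.comp hγ.1).continuousAt.eventually ?_
    rw [Function.comp_apply, hfa]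
    exact hT.param_image_mem_nhds hγ ha one_pos le_rfl
  obtain ⟨δ, hδ, hball⟩ := Metric.eventually_nhds_iff.1 hev
  have hpos : 0 < min δ 1 := by positivity
  have hle : min δ 1 / 2 < δ := (half_lt_self hpos).trans_le (min_le_left _ _)
  have hle1 : min δ 1 / 2 < 1 := (half_lt_self hpos).trans_le (min_le_right _ _)
  refine ⟨min δ 1 / 2, by positivity, hle1, ?_⟩
  have step : ∀ s ∈ Icc 0 (min δ 1 / 2), ∃ s' ∈ Icc 0 s, f (γ s) = γ s' := by
    intro s hs
    rcases hs.1.eq_or_lt with rfl | hs0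
    · exact ⟨0, by simp, hfa⟩
    have hs1 := hs.2.trans_lt hle1
    obtain ⟨s', hs', h⟩ := hball (y := s)
      (by rw [Real.dist_eq, sub_zero, abs_of_pos hs0]; exact hs.2.trans_lt hle)
    refine ⟨s', ⟨hs'.1, ?_⟩, h.symm⟩
    by_contra! hlt
    refine hT.notMem_component_of_param hγ le_rfl hs0 hlt hs'.2 ?_
    rw [h]
    exact hatt _ (hT.isCut_param hγ hs0 hs1)
  intro n
  induction n with
  | zero => exact fun s hs => ⟨s, ⟨hs.1, le_rfl⟩, rfl⟩
  | succ n ih =>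
    intro s hs
    obtain ⟨s', hs', h⟩ := ih s hs
    obtain ⟨s'', hs'', h'⟩ := step s' ⟨hs'.1, hs'.2.trans hs.2⟩
    exact ⟨s'', ⟨hs''.1, hs''.2.trans hs'.2⟩, by rw [Function.iterate_succ_apply', h, h']⟩

theorem exists_stable_nhds [Nontrivial T] (hT : IsTreeSpace T) {f : T → T}
    (hf : Continuous f) {a : T} (ha : ¬ IsCut a) (hfa : f a = a)
    (hatt : ∀ x, IsCut x → f x ∈ connectedComponentIn {x}ᶜ a) {G : Set T} (hG : G ∈ 𝓝 a) :
    ∃ V ∈ 𝓝 a, ∀ (n : ℕ), ∀ x ∈ V, f^[n] x ∈ G := by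
  obtain ⟨b, hb⟩ := exists_ne a
  obtain ⟨γ, hγ, rfl, -⟩ := hT.exists_param hb.symm
  obtain ⟨s₀, hs₀, hs₀1, hit⟩ := hT.exists_iterate_param_le hf hγ ha hfa hatt
  obtain ⟨δ, hδ, hball⟩ := Metric.eventually_nhds_iff.1 (hγ.1.continuousAt.eventually hG)
  refine ⟨γ '' Icc 0 (min s₀ (δ / 2)), hT.param_image_mem_nhds hγ ha (by positivity)
    ((min_le_left _ _).trans hs₀1.le), ?_⟩
  rintro n _ ⟨s, hs, rfl⟩
  obtain ⟨s', hs', h⟩ := hit n s ⟨hs.1, hs.2.trans (min_le_left _ _)⟩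
  rw [h]
  refine hball ?_
  rw [Real.dist_eq, sub_zero, abs_of_nonneg hs'.1]
  have := hs.2.trans (min_le_right _ _)
  linarith [hs'.2]

theorem exists_global_attractor [Nontrivial T] (hT : IsTreeSpace T) {f : T → T}
    (hf : Continuous f) (hcut : ∀ x : T, IsCut x → ∀ p : ℕ, 1 ≤ p → f^[p] x ≠ x) :
    ∃ a, f a = a ∧ ∀ x, IsCut x → ∀ m : ℕ, 1 ≤ m → f^[m] x ∈ connectedComponentIn {x}ᶜ a := by
  obtain ⟨a, hfa, hatt⟩ := hT.exists_fixed_attractor hf fun x hx => hcut x hx 1 le_rfl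
  have ha : ¬ IsCut a := fun h => hcut a h 1 le_rfl hfa
  refine ⟨a, hfa, fun x hx m hm => ?_⟩
  obtain ⟨b, hfb, hattb⟩ := hT.exists_fixed_attractor (hf.iterate m) fun x hx => hcut x hx m hm
  rcases eq_or_ne a b with rfl | hab
  · exact hattb x hx
  obtain ⟨γ, hγ, rfl, rfl⟩ := hT.exists_param hab
  obtain ⟨s, hs0, hs1, hit⟩ := hT.exists_iterate_param_le hf hγ ha hfa hatt
  obtain ⟨s', hs', h⟩ := hit m s ⟨hs0.le, le_rfl⟩
  have hmem := hattb _ (hT.isCut_param hγ hs0 hs1)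
  rw [h] at hmem
  rcases hs'.2.eq_or_lt with rfl | hlt
  · exact (connectedComponentIn_subset _ _ hmem rfl).elim
  · exact (hT.notMem_component_of_param hγ hs'.1 hlt hs1 le_rfl
      (mem_connectedComponentIn_symm hmem)).elim

theorem visits_attractor_or_eventually_fixed [Nontrivial T] (hT : IsTreeSpace T) {g : T → T}
    (hg : Continuous g) (hfix : ∀ x, ∀ m : ℕ, 1 ≤ m → g^[m] x = x → g x = x)
    (hcut : ∀ x, IsCut x → g x ≠ x) {a : T} (ha : ¬ IsCut a)
    (hatt : ∀ x, IsCut x → ∀ m : ℕ, 1 ≤ m → g^[m] x ∈ connectedComponentIn {x}ᶜ a) (α : T) :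
    (∀ G ∈ 𝓝 a, ∃ n, g^[n] α ∈ G) ∨ ∃ N, g (g^[N] α) = g^[N] α := by
  have hrep : ∀ z, ∀ i j : ℕ, i < j → g^[i] z = g^[j] z → g (g^[i] z) = g^[i] z := by
    intro z i j hij h
    refine hfix _ (j - i) (by omega) ?_
    rw [← Function.iterate_add_apply, Nat.sub_add_cancel hij.le, h]
  by_contra! hcon
  obtain ⟨⟨G, hG, hGn⟩, hN⟩ := hcon
  let x : ℕ → T := fun n => g^[n] α
  have hinj : Function.Injective x := by
    intro i j h
    by_contra hij
    rcases Nat.lt_or_gt_of_ne hij with h' | h'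
    · exact hN i (hrep α i j h' h)
    · exact hN j (hrep α j i h' h.symm)
  have hevcut : ∀ᶠ n in atTop, IsCut (x n) := by
    rw [← Nat.cofinite_eq_atTop]
    exact hT.finite_setOf_not_isCut.preimage hinj.injOn
  obtain ⟨N₀, hN₀⟩ := eventually_atTop.1 hevcut
  obtain ⟨S, hS, hpar, hcov⟩ := hT.exists_finite_rooted_cover a
  let M : (ℝ → T) → Set ℝ := fun η => {s | s ∈ Icc (0 : ℝ) 1 ∧ ∃ n ≥ N₀, x n = η s}
  have hbdd : ∀ η, BddBelow (M η) := fun η => ⟨0, fun s hs => hs.1.1⟩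
  have hanti : ∀ η ∈ S, ∀ n₁ n : ℕ, N₀ ≤ n₁ → n₁ < n → ∀ s₁ ∈ Icc (0 : ℝ) 1,
      ∀ s ∈ Icc (0 : ℝ) 1, x n₁ = η s₁ → x n = η s → s < s₁ := by
    intro η hη n₁ n hn₁ hn s₁ hs₁ s hs h₁ h
    obtain ⟨hη', h0⟩ := hpar η hη
    by_contra! hle
    have hmem := hatt _ (hN₀ n₁ hn₁) (n - n₁) (by omega)
    have hxn : g^[n - n₁] (x n₁) = x n := by
      simp only [x]
      rw [← Function.iterate_add_apply, Nat.sub_add_cancel hn.le]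
    rw [hxn, h, h₁, ← h0] at hmem
    rcases hle.eq_or_lt with rfl | hlt
    · exact connectedComponentIn_subset _ _ hmem rfl
    rcases hs₁.1.eq_or_lt with rfl | hpos
    · exact ha (h0 ▸ h₁ ▸ hN₀ n₁ hn₁)
    · exact hT.notMem_component_of_param hη' le_rfl hpos hlt hs.2 hmem
  have hcluster : ∀ y, MapClusterPt y atTop x →
      ∃ η ∈ S, y = η (sInf (M η)) ∧ 0 ≤ sInf (M η) ∧ sInf (M η) < 1 := by
    intro y hy
    rw [mapClusterPt_iff_frequently] at hy
    obtain ⟨η, hη, hfreq⟩ : ∃ η ∈ S, ∀ U ∈ 𝓝 y, ∃ᶠ n in atTop, x n ∈ U ∧ x n ∈ η '' Icc 0 1 := by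
      by_contra! hno
      choose! U hU hUn using hno
      obtain ⟨n, hn, hnS, hnN⟩ := ((hy _ ((biInter_mem hS).2 hU)).and_eventually
        (((eventually_all_finite hS).2 hUn).and
          (eventually_ge_atTop N₀))).exists
      obtain ⟨η, hη, hmem⟩ := hcov (x n) fun h => ha (h ▸ hN₀ n hnN)
      exact hnS η hη (mem_iInter₂.1 hn η hη) hmem
    have hnext : ∀ U ∈ 𝓝 y, ∀ k, ∃ n ≥ k, N₀ ≤ n ∧ ∃ s ∈ Icc (0 : ℝ) 1, x n = η s ∧ x n ∈ U := by
      intro U hU k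
      obtain ⟨n, ⟨hnU, s, hs, hns⟩, hk, hn⟩ := ((hfreq U hU).and_eventually
        ((eventually_ge_atTop k).and (eventually_ge_atTop N₀))).exists
      exact ⟨n, hk, hn, s, hs, hns.symm, hnU⟩
    obtain ⟨n₁, -, hn₁, s₁, hs₁, h₁, -⟩ := hnext univ univ_mem 0
    obtain ⟨n₂, hn₁₂, hn₂, s₂, hs₂, h₂, -⟩ := hnext univ univ_mem (n₁ + 1)
    have hne : (M η).Nonempty := ⟨s₁, hs₁, n₁, hn₁, h₁⟩
    refine ⟨η, hη, ?_, le_csInf hne fun s hs => hs.1.1, ?_⟩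
    · by_contra hyη
      obtain ⟨U, V, hU, hV, hyU, hηV, hUV⟩ := t2_separation hyη
      obtain ⟨δ, hδ, hball⟩ := Metric.eventually_nhds_iff.1
        ((hpar η hη).1.1.continuousAt.eventually (hV.mem_nhds hηV))
      obtain ⟨s, ⟨hs, n, hn, hns⟩, hlt⟩ := exists_lt_of_csInf_lt hne (lt_add_of_pos_right _ hδ)
      obtain ⟨n', hnn', hn', s', hs', hns', hU'⟩ := hnext U (hU.mem_nhds hyU) (n + 1)
      have h1 := hanti η hη n n' hn hnn' s hs s' hs' hns hns'
      have h2 := csInf_le (hbdd η) (show s' ∈ M η from ⟨hs', n', hn', hns'⟩)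
      refine disjoint_left.1 hUV hU' (hns' ▸ hball ?_)
      rw [Real.dist_eq, abs_of_nonneg (by linarith)]
      linarith
    · have h1 := hanti η hη n₁ n₂ hn₁ hn₁₂ s₁ hs₁ s₂ hs₂ h₁ h₂
      have h2 := csInf_le (hbdd η) (show s₂ ∈ M η from ⟨hs₂, n₂, hn₂, h₂⟩)
      linarith [hs₁.2]
  let Ω : Set T := {y | MapClusterPt y atTop x}
  have hΩfin : Ω.Finite := (hS.image fun η => η (sInf (M η))).subset fun y hy => by
    obtain ⟨η, hη, h, -⟩ := hcluster y hy
    exact ⟨η, hη, h.symm⟩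
  have hΩinv : ∀ y ∈ Ω, g y ∈ Ω := by
    intro y hy
    have h1 : MapClusterPt (g y) atTop (g ∘ x) := MapClusterPt.continuousAt_comp hg.continuousAt hy
    have h2 : g ∘ x = x ∘ fun n => n + 1 := by
      funext n
      simp [x, Function.iterate_succ_apply']
    rw [h2] at h1
    exact h1.of_comp (tendsto_add_atTop_nat 1)
  have := hT.compact
  obtain ⟨y, hy⟩ : Ω.Nonempty := exists_clusterPt_of_compactSpace (map x atTop)
  have hit : ∀ n : ℕ, g^[n] y ∈ Ω := fun n => by
    induction n with
    | zero => exact hy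
    | succ n ih =>
      rw [Function.iterate_succ_apply']
      exact hΩinv _ ih
  obtain ⟨z, hz, hgz⟩ : ∃ z ∈ Ω, g z = z := by
    obtain ⟨i, -, j, -, hij, h⟩ := infinite_univ.exists_ne_map_eq_of_mapsTo
      (f := fun n : ℕ => g^[n] y) (fun n _ => hit n) hΩfin
    rcases Nat.lt_or_gt_of_ne hij with h' | h'
    · exact ⟨_, hit i, hrep y i j h' h⟩
    · exact ⟨_, hit j, hrep y j i h' h.symm⟩
  obtain ⟨η, hη, hzη, h0, h1⟩ := hcluster z hz
  have hza : z = a := by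
    rcases h0.eq_or_lt with h0 | h0
    · rw [hzη, ← h0, (hpar η hη).2]
    · exact (hcut z (hzη ▸ hT.isCut_param (hpar η hη).1 h0 h1) hgz).elim
  obtain ⟨n, hn⟩ := (mapClusterPt_iff_frequently.1 (hza ▸ hz) G hG).exists
  exact hGn n hn

theorem kLimsup_iterate_subset_kLiminf [Nontrivial T] (hT : IsTreeSpace T) {g : T → T}
    (hg : Continuous g) (hfix : ∀ x, ∀ m : ℕ, 1 ≤ m → g^[m] x = x → g x = x)
    (hcut : ∀ x, IsCut x → g x ≠ x) {a : T} (hga : g a = a)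
    (hatt : ∀ x, IsCut x → ∀ m : ℕ, 1 ≤ m → g^[m] x ∈ connectedComponentIn {x}ᶜ a)
    {A : Set T} (hAc : IsCompact A) (hA : IsPreconnected A) :
    KLimsup (fun n => g^[n] '' A) ⊆ KLiminf (fun n => g^[n] '' A) := by
  have ha : ¬ IsCut a := fun h => hcut a h hga
  have hatt1 : ∀ x, IsCut x → g x ∈ connectedComponentIn {x}ᶜ a := fun x hx => hatt x hx 1 le_rfl
  have hsplit : ∀ {N n : ℕ} (_ : N ≤ n) (x : T), g^[n] x = g^[n - N] (g^[N] x) := by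
    intro N n h x
    rw [← Function.iterate_add_apply, Nat.sub_add_cancel h]
  intro y hy
  by_contra hyn
  suffices h : ∃ U, IsOpen U ∧ y ∈ U ∧ ∀ᶠ n : ℕ in atTop, ∀ x ∈ A, g^[n] x ∉ U by
    obtain ⟨U, hU, hyU, hev⟩ := h
    obtain ⟨n, ⟨_, hz, x, hx, rfl⟩, hn⟩ := ((hy U hU hyU).and_eventually hev).exists
    exact hn x hx hz
  refine hAc.induction_on (p := fun s => ∃ U, IsOpen U ∧ y ∈ U ∧
    ∀ᶠ n : ℕ in atTop, ∀ x ∈ s, g^[n] x ∉ U) ⟨univ, isOpen_univ, mem_univ _, by simp⟩ ?_ ?_ ?_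
  · rintro s t hst ⟨U, hU, hyU, hev⟩
    exact ⟨U, hU, hyU, hev.mono fun n hn x hx => hn x (hst hx)⟩
  · rintro s t ⟨U, hU, hyU, hev⟩ ⟨V, hV, hyV, hev'⟩
    refine ⟨U ∩ V, hU.inter hV, ⟨hyU, hyV⟩, (hev.and hev').mono ?_⟩
    rintro n ⟨hn, hn'⟩ x (hx | hx) hxUV
    exacts [hn x hx hxUV.1, hn' x hx hxUV.2]
  intro α hα
  by_cases hvis : ∀ G ∈ 𝓝 a, ∃ n, g^[n] α ∈ G
  · have hconv : ∀ G ∈ 𝓝 a, ∃ V ∈ 𝓝 α, ∀ᶠ n : ℕ in atTop, ∀ x ∈ V, g^[n] x ∈ G := by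
      intro G hG
      obtain ⟨W, hW, hWG⟩ := hT.exists_stable_nhds hg ha hga hatt1 hG
      obtain ⟨N, hN⟩ := hvis (interior W) (interior_mem_nhds.2 hW)
      refine ⟨g^[N] ⁻¹' interior W,
        (isOpen_interior.preimage (hg.iterate N)).mem_nhds hN, ?_⟩
      filter_upwards [eventually_ge_atTop N] with n hn x hx
      rw [hsplit hn]
      exact hWG _ _ (interior_subset hx)
    rcases eq_or_ne y a with rfl | hya
    · refine (hyn fun U hU hyU => ?_).elim
      obtain ⟨V, hV, hev⟩ := hconv U (hU.mem_nhds hyU)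
      exact hev.mono fun n hn => ⟨_, hn α (mem_of_mem_nhds hV), mem_image_of_mem _ hα⟩
    · obtain ⟨U, G, hU, hG, hyU, haG, hUG⟩ := t2_separation hya
      obtain ⟨V, hV, hev⟩ := hconv G (hG.mem_nhds haG)
      exact ⟨V, mem_nhdsWithin_of_mem_nhds hV, U, hU, hyU,
        hev.mono fun n hn x hx hxU => disjoint_left.1 hUG hxU (hn x hx)⟩
  obtain ⟨N, hN⟩ := (hT.visits_attractor_or_eventually_fixed hg hfix hcut ha hatt α).resolve_left
    hvis
  have heN : ∀ n : ℕ, g^[n] (g^[N] α) = g^[N] α := fun n => Function.iterate_fixed hN n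
  have hea : g^[N] α ≠ a := fun h => hvis fun G hG => ⟨N, h ▸ mem_of_mem_nhds hG⟩
  by_cases hconst : ∀ x ∈ A, g^[N] x = g^[N] α
  · have hconst' : ∀ n ≥ N, ∀ x ∈ A, g^[n] x = g^[N] α := fun n hn x hx => by
      rw [hsplit hn, hconst x hx, heN]
    have hye : y ≠ g^[N] α := fun h => hyn fun U hU hyU =>
      (eventually_ge_atTop N).mono fun n hn =>
        ⟨_, hyU, α, hα, (hconst' n hn α hα).trans h.symm⟩
    exact ⟨A, self_mem_nhdsWithin, {g^[N] α}ᶜ, isOpen_compl_singleton, hye,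
      (eventually_ge_atTop N).mono fun n hn x hx h => h (hconst' n hn x hx)⟩
  push Not at hconst
  obtain ⟨q, hq, hqe⟩ := hconst
  obtain ⟨γ, hγ, h0, h1⟩ := hT.exists_param hea
  have he : ¬ IsCut (γ 0) := fun h => hcut _ h (by rw [h0, hN])
  have hA' : IsPreconnected (g^[N] '' A) := hA.image _ (hg.iterate N).continuousOn
  obtain ⟨δ, hδ, hδ1, hsep⟩ := hT.exists_separating_param hγ he (h0 ▸ hqe)
  have hs0 : 0 < δ / 2 := half_pos hδ
  have hsδ : δ / 2 < δ := half_lt_self hδ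
  have hs1 : δ / 2 < 1 := hsδ.trans_le hδ1
  generalize δ / 2 = s at hs0 hsδ hs1
  have h0A : γ 0 ∈ g^[N] '' A := ⟨α, hα, h0.symm⟩
  have hsA : γ s ∈ g^[N] '' A := by
    by_contra hnot
    exact hT.notMem_component_of_param hγ le_rfl hs0 hs1 le_rfl (mem_connectedComponentIn_trans
      (hA'.mem_connectedComponentIn_compl hnot h0A ⟨q, hq, rfl⟩)
      (mem_connectedComponentIn_symm (hsep s hs0 hsδ)))
  have hJA : γ '' Icc 0 s ⊆ g^[N] '' A := by
    rintro _ ⟨r, hr, rfl⟩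
    exact hT.param_mem_of_isPreconnected hγ le_rfl hr.1 hr.2 hs1.le hA' h0A hsA
  have hJpre : IsPreconnected (g '' (γ '' Icc 0 s)) :=
    (isPreconnected_Icc.image _ hγ.1.continuousOn).image _ hg.continuousOn
  have h0J : γ 0 ∈ g '' (γ '' Icc 0 s) :=
    ⟨γ 0, ⟨0, ⟨le_rfl, hs0.le⟩, rfl⟩, by rw [h0, hN]⟩
  have hsJ : γ s ∈ g '' (γ '' Icc 0 s) := by
    by_contra hnot
    have hmem := hatt1 _ (hT.isCut_param hγ hs0 hs1)
    rw [← h1] at hmem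
    exact hT.notMem_component_of_param hγ le_rfl hs0 hs1 le_rfl (mem_connectedComponentIn_trans
      (hJpre.mem_connectedComponentIn_compl hnot h0J ⟨γ s, ⟨s, ⟨hs0.le, le_rfl⟩, rfl⟩, rfl⟩)
      (mem_connectedComponentIn_symm hmem))
  have hJJ : γ '' Icc 0 s ⊆ g '' (γ '' Icc 0 s) := by
    rintro _ ⟨r, hr, rfl⟩
    exact hT.param_mem_of_isPreconnected hγ le_rfl hr.1 hr.2 hs1.le hJpre h0J hsJ
  have hmono : Monotone fun n => g^[n] '' (γ '' Icc 0 s) := by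
    refine monotone_nat_of_le_succ fun n => ?_
    rw [Function.iterate_succ, image_comp]
    exact image_mono hJJ
  have hJnhds : γ '' Icc 0 s ∈ 𝓝 (g^[N] α) := h0 ▸ hT.param_image_mem_nhds hγ he hs0 hs1.le
  obtain ⟨U, hU, hyU, hUn⟩ : ∃ U, IsOpen U ∧ y ∈ U ∧
      ¬ ∀ᶠ n in atTop, (U ∩ g^[n] '' A).Nonempty := by
    by_contra! hno
    exact hyn fun U hU hyU => hno U hU hyU
  refine ⟨_, mem_nhdsWithin_of_mem_nhds ((hg.iterate N).continuousAt hJnhds), U, hU, hyU, ?_⟩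
  filter_upwards [eventually_ge_atTop N] with n hn x hx hxU
  refine hUn ?_
  filter_upwards [eventually_ge_atTop n] with m hm
  refine ⟨_, hxU, ?_⟩
  have hxm : g^[n] x ∈ g^[m - N] '' (γ '' Icc 0 s) := by
    rw [hsplit hn]
    exact hmono (Nat.sub_le_sub_right hm N) (mem_image_of_mem _ hx)
  obtain ⟨_, hw, hwx⟩ := hxm
  obtain ⟨z, hz, rfl⟩ := hJA hw
  exact ⟨z, hz, by rw [hsplit (hn.trans hm), hwx]⟩

end IsTreeSpace

section Hyperspace

variable {T : Type*} [MetricSpace T]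

theorem eventually_disjoint_of_disjoint_kLimsup {A : ℕ → Set T} {C : Set T} (hC : IsCompact C)
    (hd : Disjoint C (KLimsup A)) : ∀ᶠ n in atTop, Disjoint (A n) C := by
  refine hC.induction_on (p := fun s => ∀ᶠ n in atTop, Disjoint (A n) s) (by simp)
    (fun s t hst ht => ht.mono fun n hn => hn.mono_right hst)
    (fun s t hs ht => (hs.and ht).mono fun n hn => hn.1.union_right hn.2) fun y hy => ?_
  have hy' := disjoint_left.1 hd hy
  simp only [KLimsup, mem_ofPred_eq, not_forall, not_frequently] at hy'
  obtain ⟨U, hU, hyU, hev⟩ := hy'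
  refine ⟨U, mem_nhdsWithin_of_mem_nhds (hU.mem_nhds hyU), hev.mono fun n hn => ?_⟩
  rw [disjoint_comm]
  exact disjoint_iff_inter_eq_empty.2 (not_nonempty_iff_eq_empty.1 hn)

theorem isClosed_kLimsup (A : ℕ → Set T) : IsClosed (KLimsup A) := by
  refine isClosed_of_closure_subset fun x hx U hU hxU => ?_
  obtain ⟨z, hzU, hz⟩ := mem_closure_iff.1 hx U hU hxU
  exact hz U hU hzU

theorem exists_tendsto_hausdorffDist [CompactSpace T] {A : ℕ → Set T}
    (hne : ∀ n, (A n).Nonempty) (hA : KLimsup A ⊆ KLiminf A) :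
    ∃ L : Set T, L.Nonempty ∧ IsCompact L ∧
      Tendsto (fun n => hausdorffDist (A n) L) atTop (𝓝 0) := by
  have hLc : IsCompact (KLimsup A) := (isClosed_kLimsup A).isCompact
  refine ⟨KLimsup A, ?_, hLc, ?_⟩
  · by_contra h
    rw [not_nonempty_iff_eq_empty] at h
    obtain ⟨n, hn⟩ := (eventually_disjoint_of_disjoint_kLimsup (A := A) isCompact_univ
      (by simp [h])).exists
    exact (hne n).ne_empty (disjoint_univ.1 hn)
  rw [Metric.tendsto_nhds]
  intro ε hε
  have hε2 : 0 < ε / 2 := half_pos hε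
  obtain ⟨t, htL, htfin, htcov⟩ := hLc.finite_cover_balls (half_pos hε2)
  have h1 : ∀ᶠ n in atTop, ∀ x ∈ t, (ball x (ε / 2 / 2) ∩ A n).Nonempty :=
    (eventually_all_finite htfin).2 fun x hx =>
      hA (htL hx) _ isOpen_ball (mem_ball_self (half_pos hε2))
  have h2 := eventually_disjoint_of_disjoint_kLimsup (A := A)
    (isOpen_thickening (δ := ε / 2) (E := KLimsup A)).isClosed_compl.isCompact
    (disjoint_compl_left_iff_subset.2 (self_subset_thickening hε2 _))
  filter_upwards [h1, h2] with n hn1 hn2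
  rw [Real.dist_eq, sub_zero, abs_of_nonneg hausdorffDist_nonneg]
  refine (hausdorffDist_le_of_mem_dist hε2.le (fun x hx => ?_) fun x hx => ?_).trans_lt
    (half_lt_self hε)
  · obtain ⟨z, hz, hxz⟩ := mem_thickening_iff.1 (not_not.1 (disjoint_left.1 hn2 hx))
    exact ⟨z, hz, hxz.le⟩
  · obtain ⟨w, hw, hxw⟩ := mem_iUnion₂.1 (htcov hx)
    obtain ⟨z, hzw, hz⟩ := hn1 w hw
    refine ⟨z, hz, ?_⟩
    have := dist_triangle_right x z w
    rw [mem_ball] at hxw hzw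
    linarith

end Hyperspace

theorem exists_common_period {T : Type*} (f : T → T) (hfin : (Function.periodicPts f).Finite) :
    ∃ p : ℕ, 1 ≤ p ∧ ∀ x ∈ Function.periodicPts f, f^[p] x = x := by
  refine ⟨∏ x ∈ hfin.toFinset, Function.minimalPeriod f x,
    Nat.succ_le_of_lt (Finset.prod_pos fun x hx => ?_), fun x hx => ?_⟩
  · exact Function.minimalPeriod_pos_of_mem_periodicPts (hfin.mem_toFinset.1 hx)
  · exact (Function.isPeriodicPt_minimalPeriod f x).trans_dvd
      (Finset.dvd_prod_of_mem _ (hfin.mem_toFinset.2 hx))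

/-- with no periodic cut-points, every subcontinuum is
asymptotically periodic. -/
theorem asympPeriodic_of_no_periodic_cut_point {T : Type*} [MetricSpace T]
    (hT : IsTreeSpace T) (f : T → T) (hf : Continuous f)
    (hcut : ∀ x : T, IsCut x → ∀ p : ℕ, 1 ≤ p → f^[p] x ≠ x) :
    ∀ A : Set T, IsSubcontinuum A → AsympPeriodic f A := by
  rintro A ⟨hne, hAc, hA⟩
  rcases subsingleton_or_nontrivial T with hsub | hnt
  · refine ⟨1, le_rfl, A, hne, hAc, ?_⟩
    have : ∀ n : ℕ, f^[1 * n] '' A = A := fun n => by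
      rw [show f^[1 * n] = id from funext fun x => Subsingleton.elim _ _, image_id]
    simp only [this, hausdorffDist_self_zero]
    exact tendsto_const_nhds
  have := hT.compact
  obtain ⟨a, hfa, hatt⟩ := hT.exists_global_attractor hf hcut
  obtain ⟨p, hp, hper⟩ := exists_common_period f <|
    hT.finite_setOf_not_isCut.subset fun x hx h => by
      obtain ⟨n, hn, hfx⟩ := hx
      exact hcut x h n hn hfx
  refine ⟨p, hp, ?_⟩
  simp only [Function.iterate_mul]
  refine exists_tendsto_hausdorffDist (fun n => hne.image _)
    (hT.kLimsup_iterate_subset_kLiminf (hf.iterate p) (fun x m hm h => hper x ?_)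
      (fun x hx => hcut x hx p hp) (Function.iterate_fixed hfa p) (fun x hx m hm => ?_)
      hAc hA.isPreconnected)
  · rw [← Function.iterate_mul] at h
    exact ⟨p * m, Nat.mul_pos hp hm, h⟩
  · rw [← Function.iterate_mul]
    exact hatt x hx _ (Nat.mul_pos hp hm)
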